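/- arXiv:2112.06659 — 2 statements merged into one kernel-verified Lean document; each statement's English description precedes it below -/
import Mathlib

section
/- Let F be a union-closed family on n elements with m sets. If H(F) ≤ 3 or H(F) ≥ n − 1, then there exists an element x ∈ {1, …, n} that belongs to more than m/2 of the sets of F. -/
open Finset

/-- The minimal members of a family of finite sets: those `A` such that no
member `B ≠ A` satisfies `B ⊆ A`. -/
def minimalSets (G : Finset (Finset ℕ)) : Finset (Finset ℕ) :=
  G.filter fun A => ∀ B ∈ G, B ≠ A → ¬ B ⊆ A

/-- The family remaining after removing the first `i` layers of the height
decomposition. -/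
def rest (F : Finset (Finset ℕ)) : ℕ → Finset (Finset ℕ)
  | 0 => F
  | i + 1 => rest F i \ minimalSets (rest F i)

/-- The `i`-th layer `π_i` of the height decomposition (meaningful for `i ≥ 1`):
`π_{i+1}` is the family of minimal members of `F \ (π₁ ∪ ⋯ ∪ π_i)`. -/
def layer (F : Finset (Finset ℕ)) : ℕ → Finset (Finset ℕ)
  | 0 => ∅
  | i + 1 => minimalSets (rest F i)

/-- The height number `H(F)`: the least `H` with `F = π₁ ∪ ⋯ ∪ π_H`,
equivalently the least `H` with `rest F H = ∅`. -/
noncomputable def height (F : Finset (Finset ℕ)) : ℕ :=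
  sInf {H : ℕ | rest F H = ∅}

/-- `F` is a union-closed family on `n` elements with `m` sets: a finite family
of `m` distinct nonempty finite sets whose union is `{1, …, n}`, closed under
unions. -/
def IsUC (F : Finset (Finset ℕ)) (n m : ℕ) : Prop :=
  F.Nonempty ∧ F.card = m ∧ (∀ A ∈ F, A.Nonempty) ∧
    F.sup id = Finset.Icc 1 n ∧ ∀ A ∈ F, ∀ B ∈ F, A ∪ B ∈ F

/-- The tent `T(A)` of a set `A` of level `i ≥ 2`: the family
`{A} ∪ {B ∈ π_{i−1} : B ⊆ A}`. -/
def tent (F : Finset (Finset ℕ)) (i : ℕ) (A : Finset ℕ) : Finset (Finset ℕ) :=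
  insert A ((layer F (i - 1)).filter fun B => B ⊆ A)

/-- `F` is separating: every pair of distinct elements of `{1, …, n}` is
separated by some member of `F`. -/
def Separating (F : Finset (Finset ℕ)) (n : ℕ) : Prop :=
  ∀ x ∈ Finset.Icc 1 n, ∀ y ∈ Finset.Icc 1 n, x ≠ y →
    ∃ A ∈ F, (x ∈ A ∧ y ∉ A) ∨ (y ∈ A ∧ x ∉ A)

/-!
Assume that every element lies in at most half of the members of the union-closed family `F`, and
let `U x` be the union of all members avoiding `x`. The members avoiding `x` are then exactly the
members contained in `U x`, so at least half of `F` lies below each `U x`.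

If `H(F) ≤ 3`, then `F` is covered by three antichains, the layers, and so has no chain of four
members. Take a minimal member `P`, an element `x ∉ P` of the union of `F`, and `y ∈ U x \ P`, which
exists because only `P` lies below `P` while `F` has more than two members. Then `U x` and `U y` are
distinct and contain `P`, and `P` is the only member below both: a second one, united with `P`,
would give a chain of four members. As the union of `F` lies below neither of them, counting shows
that exactly half of `F` lies below `U x`, exactly half below `U y`, and every other member below
one of the two. For `p ∈ P` the set `U p` is below one of them, but then `P` and the half of `F`
below `U p` lie below it too, which is too much.

If `H(F) ≥ n - 1`, some member `S` has at most two elements, because the least cardinality strictly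
increases each time a layer is removed. Uniting the members disjoint from `S` with `S` shows that
there are fewer of them than members containing `S`, and an element of `S` has to lie in more than
half of the members.
-/

section Abundant

variable {α : Type*} [DecidableEq α] {F : Finset (Finset α)} {x : α}

/-- An element is abundant in a family if it belongs to more than half of its members. -/
def IsAbundant (F : Finset (Finset α)) (x : α) : Prop :=
  #F < 2 * #{A ∈ F | x ∈ A}

lemma IsAbundant.mem_sup_id (hx : IsAbundant F x) : x ∈ F.sup id := by
  obtain ⟨A, hA⟩ := card_pos.mp (show 0 < #{A ∈ F | x ∈ A} by unfold IsAbundant at hx; lia)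
  rw [mem_filter] at hA
  exact mem_sup.mpr ⟨A, hA⟩

lemma not_isAbundant_iff : ¬IsAbundant F x ↔ #F ≤ 2 * #{A ∈ F | x ∉ A} := by
  have := card_filter_add_card_filter_not (s := F) (x ∈ ·)
  unfold IsAbundant
  lia

lemma card_filter_disjoint_lt_card_filter_subset (hF : SupClosed (F : Set (Finset α)))
    (hnonempty : ∀ A ∈ F, A.Nonempty) {S : Finset α} (hS : S ∈ F) :
    #{A ∈ F | Disjoint A S} < #{A ∈ F | S ⊆ A} := by
  have hinj : Set.InjOn (· ∪ S) ({A ∈ F | Disjoint A S} : Finset (Finset α)) := by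
    intro A hA B hB hAB
    rw [mem_coe, mem_filter] at hA hB
    rw [← union_sdiff_cancel_right hA.2, ← union_sdiff_cancel_right hB.2]
    exact congrArg (· \ S) hAB
  rw [← card_image_of_injOn hinj]
  refine card_lt_card ((ssubset_iff_of_subset ?_).mpr ⟨S, by simpa using hS, ?_⟩)
  · simp only [image_subset_iff, mem_filter]
    exact fun A hA ↦ ⟨hF hA.1 hS, subset_union_right⟩
  · simp only [mem_image, mem_filter, union_eq_right, not_exists, not_and, and_imp]
    intro A hA hdisj hAS
    exact (hnonempty A hA).ne_empty (hdisj.eq_bot_of_le hAS)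

lemma exists_mem_isAbundant_of_card_le_two (hF : SupClosed (F : Set (Finset α)))
    (hnonempty : ∀ A ∈ F, A.Nonempty) {S : Finset α} (hS : S ∈ F) (hcard : #S ≤ 2) :
    ∃ x ∈ S, IsAbundant F x := by
  obtain ⟨a, b, rfl⟩ : ∃ a b, S = {a, b} := by
    have hpos := (hnonempty S hS).card_pos
    obtain h | h : #S = 1 ∨ #S = 2 := by lia
    · obtain ⟨a, rfl⟩ := card_eq_one.mp h
      exact ⟨a, a, by simp⟩
    · obtain ⟨a, b, -, rfl⟩ := card_eq_two.mp h
      exact ⟨a, b, rfl⟩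
  have hlt : #{A ∈ F | ¬(a ∈ A ∨ b ∈ A)} < #{A ∈ F | a ∈ A ∧ b ∈ A} := by
    simpa [insert_subset_iff] using card_filter_disjoint_lt_card_filter_subset hF hnonempty hS
  have hsum : #{A ∈ F | a ∈ A} + #{A ∈ F | b ∈ A} =
      #{A ∈ F | a ∈ A ∨ b ∈ A} + #{A ∈ F | a ∈ A ∧ b ∈ A} := by
    rw [filter_or, filter_and, card_union_add_card_inter]
  have hcompl := card_filter_add_card_filter_not (s := F) (fun A ↦ a ∈ A ∨ b ∈ A)
  by_contra! hnot
  have ha := hnot a (by simp)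
  have hb := hnot b (by simp)
  unfold IsAbundant at ha hb
  lia

end Abundant

section LargestAvoiding

variable {α : Type*} [DecidableEq α] {F : Finset (Finset α)} {x : α}

/-- The union of the members of `F` that avoid `x`. In a nonempty union-closed family without
abundant elements it is the largest member avoiding `x`. -/
def largestAvoiding (F : Finset (Finset α)) (x : α) : Finset α :=
  {A ∈ F | x ∉ A}.sup id

lemma notMem_largestAvoiding : x ∉ largestAvoiding F x := by
  simp [largestAvoiding, mem_sup]

lemma subset_largestAvoiding {A : Finset α} (hA : A ∈ F) (hx : x ∉ A) :
    A ⊆ largestAvoiding F x :=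
  le_sup (f := id) (mem_filter.mpr ⟨hA, hx⟩)

lemma largestAvoiding_mem (hF : SupClosed (F : Set (Finset α))) (hne : F.Nonempty)
    (hx : ¬IsAbundant F x) : largestAvoiding F x ∈ F := by
  have hcard := not_isAbundant_iff.mp hx
  have hFpos := hne.card_pos
  exact hF.finsetSup_mem (card_pos.mp (by lia)) fun A hA ↦ (mem_filter.mp hA).1

lemma card_le_two_mul_card_filter_subset_largestAvoiding (hx : ¬IsAbundant F x) :
    #F ≤ 2 * #{A ∈ F | A ⊆ largestAvoiding F x} := by
  have hsub : {A ∈ F | x ∉ A} ⊆ {A ∈ F | A ⊆ largestAvoiding F x} :=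
    monotone_filter_right F fun A hA hxA ↦ subset_largestAvoiding hA hxA
  have := card_le_card hsub
  have := not_isAbundant_iff.mp hx
  lia

lemma two_lt_card_of_forall_not_isAbundant (hF : SupClosed (F : Set (Finset α)))
    (hnonempty : ∀ A ∈ F, A.Nonempty) (hne : F.Nonempty) (h : ∀ x, ¬IsAbundant F x) : 2 < #F := by
  have hU x : largestAvoiding F x ∈ F := largestAvoiding_mem hF hne (h x)
  have hsup : F.sup id ∈ F := hF.finsetSup_mem hne fun A hA ↦ hA
  obtain ⟨x, hx⟩ := hnonempty _ hsup
  obtain ⟨y, hy⟩ := hnonempty _ (hU x)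
  have hy' : y ∈ F.sup id := mem_sup.mpr ⟨_, hU x, hy⟩
  exact two_lt_card.mpr ⟨_, hsup, _, hU x, _, hU y, ne_of_mem_of_not_mem' hx notMem_largestAvoiding,
    ne_of_mem_of_not_mem' hy' notMem_largestAvoiding,
    ne_of_mem_of_not_mem' hy notMem_largestAvoiding⟩

lemma exists_largestAvoiding_ne_of_minimal (hF : SupClosed (F : Set (Finset α)))
    (hnonempty : ∀ A ∈ F, A.Nonempty) (h : ∀ x, ¬IsAbundant F x) {P : Finset α}
    (hP : Minimal (· ∈ F) P) :
    ∃ x ∈ F.sup id, ∃ y ∈ F.sup id, P ⊆ largestAvoiding F x ∧ P ⊆ largestAvoiding F y ∧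
      largestAvoiding F x ≠ largestAvoiding F y := by
  have hne : F.Nonempty := ⟨P, hP.prop⟩
  have htwo := two_lt_card_of_forall_not_isAbundant hF hnonempty hne h
  have hnot_subset {C : Finset α} (hC : #F ≤ 2 * #{A ∈ F | A ⊆ C}) : ¬C ⊆ P := by
    intro hCP
    have hsub : {A ∈ F | A ⊆ C} ⊆ {P} := fun A hA ↦ by
      rw [mem_filter] at hA
      exact mem_singleton.mpr (hP.eq_of_le hA.1 (hA.2.trans hCP))
    have hone : #{A ∈ F | A ⊆ C} ≤ 1 := card_le_one_iff_subset_singleton.mpr ⟨P, hsub⟩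
    lia
  obtain ⟨x, hx, hxP⟩ := not_subset.mp <| hnot_subset (C := F.sup id) (by
    rw [filter_true_of_mem fun A hA ↦ show A ⊆ F.sup id from le_sup (f := id) hA]
    lia)
  obtain ⟨y, hy, hyP⟩ :=
    not_subset.mp <| hnot_subset (card_le_two_mul_card_filter_subset_largestAvoiding (h x))
  exact ⟨x, hx, y, mem_sup.mpr ⟨_, largestAvoiding_mem hF hne (h x), hy⟩,
    subset_largestAvoiding hP.prop hxP, subset_largestAvoiding hP.prop hyP,
    ne_of_mem_of_not_mem' hy notMem_largestAvoiding⟩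

lemma card_add_two_le_two_mul_card_filter_subset (hx : ¬IsAbundant F x) {P C : Finset α}
    (hP : P ∈ F) (hxP : x ∈ P) (hPC : P ⊆ C) (hUC : largestAvoiding F x ⊆ C) :
    #F + 2 ≤ 2 * #{A ∈ F | A ⊆ C} := by
  have hssub : {A ∈ F | A ⊆ largestAvoiding F x} ⊂ {A ∈ F | A ⊆ C} := by
    refine (ssubset_iff_of_subset ?_).mpr ⟨P, mem_filter.mpr ⟨hP, hPC⟩, fun hPU ↦ ?_⟩
    · exact monotone_filter_right F fun A _ hA ↦ hA.trans hUC
    · exact notMem_largestAvoiding ((mem_filter.mp hPU).2 hxP)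
  have hlt := card_lt_card hssub
  have hhalf := card_le_two_mul_card_filter_subset_largestAvoiding hx
  lia

end LargestAvoiding

section ChainHeight

lemma natCast_le_chainHeight_of_strictMono {β : Type*} [Preorder β] {s : Set β} {n : ℕ}
    {f : Fin n → β} (hf : StrictMono f) (hs : ∀ i, f i ∈ s) : n ≤ s.chainHeight (· ≤ ·) := by
  have hcard : n ≤ (Set.range f).encard := by simpa using hf.injective.encard_range
  exact hcard.trans <| Set.encard_le_chainHeight_of_isChain s _ (Set.range_subset_iff.mpr hs)
    hf.monotone.isChain_range

variable {α : Type*} [DecidableEq α] {F : Finset (Finset α)}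

lemma eq_of_subset_of_subset_of_chainHeight_le_three (hF : SupClosed (F : Set (Finset α)))
    (hchain : (F : Set (Finset α)).chainHeight (· ⊆ ·) ≤ 3) {P C D T : Finset α}
    (hP : Minimal (· ∈ F) P) (hC : C ∈ F) (hD : D ∈ F) (hT : T ∈ F) (hPC : P ⊆ C) (hPD : P ⊆ D)
    (hCD : C ≠ D) (hCT : C ⊂ T) (hDT : D ⊂ T) {A : Finset α} (hA : A ∈ F) (hAC : A ⊆ C)
    (hAD : A ⊆ D) : A = P := by
  by_contra hAP
  have hAPmem : A ∪ P ∈ F := hF hA hP.prop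
  have hlt : P ⊂ A ∪ P := subset_union_right.ssubset_of_ne fun h ↦
    hAP (hP.eq_of_le hA (union_eq_right.mp h.symm))
  have heq {E : Finset α} (hE : E ∈ F) (hAE : A ⊆ E) (hPE : P ⊆ E) (hET : E ⊂ T) :
      A ∪ P = E := by
    by_contra hne
    have hAPE : A ∪ P ⊂ E := (union_subset hAE hPE).ssubset_of_ne hne
    have hmono : StrictMono ![P, A ∪ P, E, T] := by
      simpa [Fin.strictMono_iff_lt_succ, Fin.forall_fin_succ] using ⟨hlt, hAPE, hET⟩
    have hfour := natCast_le_chainHeight_of_strictMono (s := (F : Set (Finset α))) hmono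
      (by simpa [Fin.forall_fin_succ] using ⟨hP.prop, hAPmem, hE, hT⟩)
    exact absurd (hfour.trans hchain) (by decide)
  exact hCD ((heq hC hAC hPC hCT).symm.trans (heq hD hAD hPD hDT))

lemma card_filter_subset_add_card_filter_subset_le_of_chainHeight_le_three
    (hF : SupClosed (F : Set (Finset α))) (hchain : (F : Set (Finset α)).chainHeight (· ⊆ ·) ≤ 3)
    {P C D T : Finset α} (hP : Minimal (· ∈ F) P) (hC : C ∈ F) (hD : D ∈ F) (hT : T ∈ F)
    (hPC : P ⊆ C) (hPD : P ⊆ D) (hCD : C ≠ D) (hCT : C ⊂ T) (hDT : D ⊂ T) :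
    #{A ∈ F | A ⊆ C} + #{A ∈ F | A ⊆ D} ≤ #{A ∈ F | A ⊆ C ∨ A ⊆ D} + 1 := by
  have hinter : #{A ∈ F | A ⊆ C ∧ A ⊆ D} ≤ 1 := by
    refine card_le_one_iff_subset_singleton.mpr ⟨P, fun A hA ↦ mem_singleton.mpr ?_⟩
    obtain ⟨hA, hAC, hAD⟩ := mem_filter.mp hA
    exact eq_of_subset_of_subset_of_chainHeight_le_three hF hchain hP hC hD hT hPC hPD hCD hCT hDT
      hA hAC hAD
  rw [← card_union_add_card_inter, ← filter_or, ← filter_and]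
  lia

theorem exists_isAbundant_of_chainHeight_le_three (hF : SupClosed (F : Set (Finset α)))
    (hnonempty : ∀ A ∈ F, A.Nonempty) (hne : F.Nonempty)
    (hchain : (F : Set (Finset α)).chainHeight (· ⊆ ·) ≤ 3) : ∃ x, IsAbundant F x := by
  by_contra! h
  let U := largestAvoiding F
  have hU x : U x ∈ F := largestAvoiding_mem hF hne (h x)
  have hUcard x : #F ≤ 2 * #{A ∈ F | A ⊆ U x} :=
    card_le_two_mul_card_filter_subset_largestAvoiding (h x)
  have hUtop {x} (hx : x ∈ F.sup id) : U x ⊂ F.sup id :=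
    (le_sup (f := id) (hU x)).ssubset_of_ne
      (ne_of_mem_of_not_mem' hx notMem_largestAvoiding).symm
  have hsup : F.sup id ∈ F := hF.finsetSup_mem hne fun _ hA ↦ hA
  obtain ⟨P, hP⟩ := F.exists_minimal hne
  obtain ⟨p, hp⟩ := hnonempty P hP.prop
  obtain ⟨x, hx, y, hy, hPx, hPy, hxy⟩ := exists_largestAvoiding_ne_of_minimal hF hnonempty h hP
  have hUx := hUcard x
  have hUy := hUcard y
  have hsum := card_filter_subset_add_card_filter_subset_le_of_chainHeight_le_three hF hchain hP
    (hU x) (hU y) hsup hPx hPy hxy (hUtop hx) (hUtop hy)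
  have hcompl := card_filter_add_card_filter_not (s := F) (fun A ↦ A ⊆ U x ∨ A ⊆ U y)
  have htop : F.sup id ∈ {A ∈ F | ¬(A ⊆ U x ∨ A ⊆ U y)} :=
    mem_filter.mpr ⟨hsup, not_or.mpr ⟨(hUtop hx).not_subset, (hUtop hy).not_subset⟩⟩
  have htop_pos : 0 < #{A ∈ F | ¬(A ⊆ U x ∨ A ⊆ U y)} := card_pos.mpr ⟨_, htop⟩
  have hUp : U p ⊆ U x ∨ U p ⊆ U y := by
    by_contra hUp
    refine (hUtop (mem_sup.mpr ⟨P, hP.prop, hp⟩)).ne ?_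
    exact card_le_one.mp (by lia) _ (mem_filter.mpr ⟨hU p, hUp⟩) _ htop
  rcases hUp with hpx | hpy
  · have := card_add_two_le_two_mul_card_filter_subset (h p) hP.prop hp hPx hpx
    lia
  · have := card_add_two_le_two_mul_card_filter_subset (h p) hP.prop hp hPy hpy
    lia

end ChainHeight

section HeightDecomposition

variable {F : Finset (Finset ℕ)} {A : Finset ℕ} {i : ℕ}

lemma isAntichain_minimalSets (G : Finset (Finset ℕ)) :
    IsAntichain (· ⊆ ·) (minimalSets G : Set (Finset ℕ)) := by
  intro A hA B hB hAB hsub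
  rw [mem_coe, minimalSets, mem_filter] at hA hB
  exact hB.2 A hA.1 hAB hsub

lemma mem_rest_succ : A ∈ rest F (i + 1) ↔ A ∈ rest F i ∧ ∃ B ∈ rest F i, B ⊂ A := by
  simp only [rest, minimalSets, mem_sdiff, mem_filter, ssubset_iff_subset_ne]
  grind

lemma rest_subset (F : Finset (Finset ℕ)) (i : ℕ) : rest F i ⊆ F :=
  antitone_nat_of_succ_le (f := rest F) (fun _ ↦ sdiff_subset) i.zero_le

lemma exists_card_add_le_card_of_mem_rest (hA : A ∈ rest F i) : ∃ B ∈ F, #B + i ≤ #A := by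
  induction i generalizing A with
  | zero => exact ⟨A, hA, le_rfl⟩
  | succ i ih =>
    obtain ⟨-, B, hB, hBA⟩ := mem_rest_succ.mp hA
    obtain ⟨C, hC, hCB⟩ := ih hB
    have := card_lt_card hBA
    exact ⟨C, hC, by lia⟩

lemma rest_eq_empty_of_card_lt {k : ℕ} (hk : ∀ A ∈ F, k ≤ #A) (hi : ∀ A ∈ F, #A < k + i) :
    rest F i = ∅ := by
  refine eq_empty_of_forall_notMem fun A hA ↦ ?_
  obtain ⟨B, hB, hBA⟩ := exists_card_add_le_card_of_mem_rest hA
  have := hk B hB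
  have := hi A (rest_subset F i hA)
  lia

lemma height_le_of_card_lt {k : ℕ} (hk : ∀ A ∈ F, k ≤ #A) (hi : ∀ A ∈ F, #A < k + i) :
    height F ≤ i :=
  Nat.sInf_le (rest_eq_empty_of_card_lt hk hi)

lemma exists_card_le_of_le_height_add {n k : ℕ} (hne : F.Nonempty) (hn : ∀ A ∈ F, #A ≤ n)
    (h : n ≤ height F + k) : ∃ S ∈ F, #S ≤ k + 1 := by
  by_contra! hlt
  obtain ⟨A, hA⟩ := hne
  have hkn : k + 1 < n := (hlt A hA).trans_le (hn A hA)
  have hheight : height F ≤ n - k - 1 :=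
    height_le_of_card_lt hlt fun B hB ↦ (hn B hB).trans_lt (by lia)
  lia

lemma rest_height (F : Finset (Finset ℕ)) : rest F (height F) = ∅ :=
  Nat.sInf_mem (s := {H | rest F H = ∅}) ⟨F.sup card + 1, rest_eq_empty_of_card_lt
    (fun A _ ↦ (#A).zero_le) fun A hA ↦ by have := le_sup (f := card) hA; lia⟩

lemma card_sdiff_rest_le_of_isChain {s : Finset (Finset ℕ)}
    (hs : IsChain (· ⊆ ·) (s : Set (Finset ℕ))) (hsF : s ⊆ F) (i : ℕ) : #(s \ rest F i) ≤ i := by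
  induction i with
  | zero => simp [rest, sdiff_eq_empty_iff_subset.mpr hsF]
  | succ i ih =>
    have hlayer : #(s ∩ minimalSets (rest F i)) ≤ 1 := by
      rw [card_le_one_iff_subsingleton, coe_inter]
      exact inter_subsingleton_of_isChain_of_isAntichain hs (isAntichain_minimalSets _)
    have hunion : s \ rest F (i + 1) = s \ rest F i ∪ s ∩ minimalSets (rest F i) := by
      rw [rest]
      grind [minimalSets]
    calc #(s \ rest F (i + 1)) ≤ #(s \ rest F i) + #(s ∩ minimalSets (rest F i)) :=
          hunion ▸ card_union_le _ _
      _ ≤ i + 1 := add_le_add ih hlayer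

lemma chainHeight_le_height (F : Finset (Finset ℕ)) :
    (F : Set (Finset ℕ)).chainHeight (· ⊆ ·) ≤ height F := by
  refine iSup_le fun ⟨t, htF, ht⟩ ↦ ?_
  lift t to Finset (Finset ℕ) using F.finite_toSet.subset htF
  simpa [rest_height] using card_sdiff_rest_le_of_isChain ht (coe_subset.mp htF) (height F)

end HeightDecomposition

/-- If `H(F) ≤ 3` or `H(F) ≥ n − 1`, then some element of
`{1, …, n}` belongs to more than `m/2` of the sets of `F`. -/
theorem frankl_of_height_le_three_or_ge_pred (n m : ℕ) (F : Finset (Finset ℕ))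
    (hF : IsUC F n m) (h : height F ≤ 3 ∨ n - 1 ≤ height F) :
    ∃ x ∈ Finset.Icc 1 n, 2 * (F.filter fun A => x ∈ A).card > m := by
  obtain ⟨hne, rfl, hnonempty, hsup, hunion⟩ := hF
  have hF : SupClosed (F : Set (Finset ℕ)) := fun A hA B hB ↦ hunion A hA B hB
  suffices ∃ x, IsAbundant F x by
    obtain ⟨x, hx⟩ := this
    exact ⟨x, hsup ▸ hx.mem_sup_id, hx⟩
  rcases h with h | h
  · exact exists_isAbundant_of_chainHeight_le_three hF hnonempty hne
      ((chainHeight_le_height F).trans (by exact_mod_cast h))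
  · have hcard (A) (hA : A ∈ F) : #A ≤ n := by
      simpa [hsup] using card_le_card (le_sup (f := id) hA)
    obtain ⟨S, hS, hS_card⟩ := exists_card_le_of_le_height_add (k := 1) hne hcard (by lia)
    obtain ⟨x, -, hx⟩ := exists_mem_isAbundant_of_card_le_two hF hnonempty hS hS_card
    exact ⟨x, hx⟩
end

section
/- Let F be a union-closed family on n elements with m sets, and let A ∈ F have level i ≥ 2. Then every element x ∈ A belongs to at least |T(A)| − 1 of the sets of the tent T(A). -/
/-!
Two distinct members `B`, `C` of the layer just below `A` that lie inside `A` satisfy `B ∪ C = A`: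
their union is still present when that layer is formed, it is not minimal there because `B` and `C`
are distinct minimal members, so it survives to the next stage, where `A` is minimal. Hence an
element of `A` cannot be missing from two sets of the tent.
-/

open Finset

section SemilatticeSup

variable {α : Type*} [SemilatticeSup α] {s : Set α} {a b c : α}

theorem supClosed_sdiff_minimal (hs : SupClosed s) : SupClosed (s \ {a | Minimal (· ∈ s) a}) := by
  rintro b ⟨hbs, hb⟩ c ⟨hcs, -⟩
  refine ⟨hs hbs hcs, fun hbc : Minimal (· ∈ s) (b ⊔ c) => hb ?_⟩
  exact hbc.eq_of_le hbs le_sup_left ▸ hbc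

theorem sup_eq_of_minimal_sdiff_minimal (hs : SupClosed s) (hb : Minimal (· ∈ s) b)
    (hc : Minimal (· ∈ s) c) (hbc : b ≠ c)
    (ha : Minimal (· ∈ s \ {a | Minimal (· ∈ s) a}) a) (hba : b ≤ a) (hca : c ≤ a) :
    b ⊔ c = a := by
  have not_minimal_sup : ¬ Minimal (· ∈ s) (b ⊔ c) := fun hsup =>
    hbc ((hsup.eq_of_le hb.prop le_sup_left).trans (hsup.eq_of_le hc.prop le_sup_right).symm)
  exact ha.eq_of_le ⟨hs hb.prop hc.prop, not_minimal_sup⟩ (sup_le hba hca)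

end SemilatticeSup

section UnionClosed

variable {F G : Finset (Finset ℕ)} {A B C : Finset ℕ} {k x : ℕ}

theorem mem_minimalSets : A ∈ minimalSets G ↔ Minimal (· ∈ G) A := by
  simp only [minimalSets, mem_filter, minimal_iff, and_congr_right_iff]
  exact fun _ => forall₂_congr fun B _ => by rw [not_imp_not, eq_comm]

theorem coe_rest_succ (F : Finset (Finset ℕ)) (k : ℕ) :
    (rest F (k + 1) : Set (Finset ℕ)) =
      (rest F k : Set (Finset ℕ)) \ {A | Minimal (· ∈ (rest F k : Set (Finset ℕ))) A} := by
  ext A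
  simp only [rest, coe_sdiff, Set.mem_sdiff, mem_coe, mem_minimalSets, Set.mem_ofPred]

theorem supClosed_rest (hF : SupClosed (F : Set (Finset ℕ))) (k : ℕ) :
    SupClosed (rest F k : Set (Finset ℕ)) := by
  induction k with
  | zero => exact hF
  | succ k ih => simpa only [coe_rest_succ] using supClosed_sdiff_minimal ih

theorem mem_layer_succ : A ∈ layer F (k + 1) ↔ Minimal (· ∈ (rest F k : Set (Finset ℕ))) A :=
  mem_minimalSets

theorem union_eq_of_mem_layer (hF : SupClosed (F : Set (Finset ℕ)))
    (hA : A ∈ layer F (k + 2)) (hB : B ∈ layer F (k + 1)) (hC : C ∈ layer F (k + 1))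
    (hBC : B ≠ C) (hBA : B ⊆ A) (hCA : C ⊆ A) : B ∪ C = A := by
  rw [mem_layer_succ, coe_rest_succ] at hA
  exact sup_eq_of_minimal_sdiff_minimal (supClosed_rest hF k) (mem_layer_succ.1 hB)
    (mem_layer_succ.1 hC) hBC hA hBA hCA

theorem card_filter_notMem_tent_le_one (hF : SupClosed (F : Set (Finset ℕ)))
    (hA : A ∈ layer F (k + 2)) (hx : x ∈ A) : #{S ∈ tent F (k + 2) A | x ∉ S} ≤ 1 := by
  have mem_layer_of_notMem {S : Finset ℕ} (hS : S ∈ tent F (k + 2) A) (hxS : x ∉ S) :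
      S ∈ layer F (k + 1) ∧ S ⊆ A :=
    mem_filter.1 ((mem_insert.1 hS).resolve_left fun hSA => hxS (hSA ▸ hx))
  simp only [card_le_one, mem_filter]
  rintro B ⟨hB, hxB⟩ C ⟨hC, hxC⟩
  obtain ⟨hB, hBA⟩ := mem_layer_of_notMem hB hxB
  obtain ⟨hC, hCA⟩ := mem_layer_of_notMem hC hxC
  by_contra hBC
  rw [← union_eq_of_mem_layer hF hA hB hC hBC hBA hCA] at hx
  exact (mem_union.1 hx).elim hxB hxC

end UnionClosed

/-- For `A ∈ F` of level `i ≥ 2`, every element `x ∈ A` belongs to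
at least `|T(A)| − 1` of the sets of the tent `T(A)`. -/
theorem tent_frequencies (n m i : ℕ) (F : Finset (Finset ℕ)) (A : Finset ℕ)
    (hF : IsUC F n m) (hi : 2 ≤ i) (hA : A ∈ layer F i) :
    ∀ x ∈ A, (tent F i A).card - 1 ≤ ((tent F i A).filter fun S => x ∈ S).card := by
  intro x hx
  obtain ⟨k, rfl⟩ := Nat.exists_eq_add_of_le' hi
  obtain ⟨-, -, -, -, hunion⟩ := hF
  have hclosed : SupClosed (F : Set (Finset ℕ)) := fun B hB C hC => hunion B hB C hC
  have hmiss : #{S ∈ tent F (k + 2) A | x ∉ S} ≤ 1 := card_filter_notMem_tent_le_one hclosed hA hx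
  have hsplit := card_filter_add_card_filter_not (s := tent F (k + 2) A) (x ∈ ·)
  omega
end
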